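/- arXiv:2409.02582 — 2 statements merged into one kernel-verified Lean document; each statement's English description precedes it below -/
import Mathlib

section
/- For all integers p ≥ 1, t_0 ≥ 2 and t_1 ≥ 2, the list L consisting of p−1 copies of −2, then the entry −3, then t_0−2 copies of −2, then the entry −(p+2), then t_1−1 copies of −2, has negative continued fraction L⁻ = −1 − (t_0 + t_1 + p·t_0·t_1)/(−1 + p·t_0 + p²·t_0·t_1), and N(L) = 4(p+1). (This is the computation for case (d) with t_0, t_1 > 1 in the classification.) -/
/-- The negative continued fraction `[r_0, …, r_k]⁻` of a list of rationals:
`[r_k]⁻ = r_k` and `[r_i, …, r_k]⁻ = r_i − 1/[r_{i+1}, …, r_k]⁻`.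
(The value on the empty list is an irrelevant junk value.) -/
def ncf : List ℚ → ℚ
  | [] => 0
  | [r] => r
  | r :: rs => r - 1 / ncf rs

/-- `N([r_0, …, r_k]) = |(r_0+1)(r_1+1)⋯(r_{k−1}+1)·r_k|`, with `N([r]) = |r|`. -/
def Nval : List ℤ → ℤ
  | [] => 1
  | [r] => |r|
  | r :: rs => |r + 1| * Nval rs

theorem ncf_cons_aux (r : ℚ) (l : List ℚ) : ncf (r :: l) = r - 1 / ncf l := by
  cases l <;> simp [ncf]

theorem ncf_rep_aux (n : ℕ) (l : List ℚ) (b d : ℚ) (hb : 0 < b) (hd : 0 < d)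
    (h : ncf l = -1 - d / b) :
    ncf (List.replicate n (-2 : ℚ) ++ l) = -1 - d / (b + n * d) := by
  induction n with
  | zero => simp [h]
  | succ n ih =>
    rw [List.replicate_succ, List.cons_append, ncf_cons_aux, ih]
    have h1 : 0 < b + n * d := by positivity
    have h2 : 0 < b + (n + 1) * d := by positivity
    have h3 : -1 - d / (b + n * d) = -((b + (n + 1) * d) / (b + n * d)) := by
      field_simp; ring
    rw [h3]
    push_cast
    field_simp
    ring

theorem Nval_rep_aux (n : ℕ) (l : List ℤ) (hl : l ≠ []) :
    Nval (List.replicate n (-2 : ℤ) ++ l) = Nval l := by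
  induction n with
  | zero => simp
  | succ n ih =>
    rw [List.replicate_succ, List.cons_append, Nval, ih]
    · simp
    · simp [hl]

theorem stmt6 (p t0 t1 : ℤ) (hp : 1 ≤ p) (h0 : 2 ≤ t0) (h1 : 2 ≤ t1) :
    ncf ((List.replicate (p - 1).toNat (-2 : ℤ) ++ [-3] ++
            List.replicate (t0 - 2).toNat (-2 : ℤ) ++ [-(p + 2)] ++
            List.replicate (t1 - 1).toNat (-2 : ℤ)).map (fun r : ℤ => (r : ℚ))) =
        -1 - ((t0 : ℚ) + (t1 : ℚ) + (p : ℚ) * t0 * t1) /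
          (-1 + (p : ℚ) * t0 + (p : ℚ) ^ 2 * t0 * t1) ∧
      Nval (List.replicate (p - 1).toNat (-2 : ℤ) ++ [-3] ++
          List.replicate (t0 - 2).toNat (-2 : ℤ) ++ [-(p + 2)] ++
          List.replicate (t1 - 1).toNat (-2 : ℤ)) = 4 * (p + 1) := by
  obtain ⟨P, rfl⟩ : ∃ P : ℕ, p = P + 1 := ⟨(p - 1).toNat, by omega⟩
  obtain ⟨T, rfl⟩ : ∃ T : ℕ, t0 = T + 2 := ⟨(t0 - 2).toNat, by omega⟩
  obtain ⟨S, rfl⟩ : ∃ S : ℕ, t1 = S + 2 := ⟨(t1 - 2).toNat, by omega⟩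
  have e1 : ((P : ℤ) + 1 - 1).toNat = P := by omega
  have e2 : ((T : ℤ) + 2 - 2).toNat = T := by omega
  have e3 : ((S : ℤ) + 2 - 1).toNat = S + 1 := by omega
  rw [e1, e2, e3]
  constructor
  · simp only [List.map_append, List.map_replicate, List.map_cons, List.map_nil,
      List.append_assoc, List.cons_append, List.nil_append]
    push_cast
    have a1 : ncf (List.replicate (S + 1) (-2 : ℚ)) = -1 - 1 / (1 + S * 1) := by
      rw [List.replicate_succ']
      exact ncf_rep_aux S [-2] 1 1 one_pos one_pos (by norm_num [ncf])
    have a2 : ncf (-((P : ℚ) + 1 + 2) :: List.replicate (S + 1) (-2 : ℚ)) =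
        -1 - (((P : ℚ) + 1) * (S + 2) + 1) / (S + 2) := by
      rw [ncf_cons_aux, a1]
      have h3 : -1 - 1 / (1 + (S : ℚ) * 1) = -(((S : ℚ) + 2) / (1 + S)) := by
        field_simp; ring
      rw [h3]
      field_simp
      ring
    have a3 := ncf_rep_aux T _ _ _ (by positivity) (by positivity) a2
    have a4 : ncf (-3 :: (List.replicate T (-2 : ℚ) ++
        (-((P : ℚ) + 1 + 2) :: List.replicate (S + 1) (-2 : ℚ)))) =
        -1 - (((S : ℚ) + 2) + (T + 2) * (((P : ℚ) + 1) * (S + 2) + 1)) /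
          (((S : ℚ) + 2) + (T + 1) * (((P : ℚ) + 1) * (S + 2) + 1)) := by
      rw [ncf_cons_aux, a3]
      have h3 : -1 - (((P : ℚ) + 1) * (S + 2) + 1) /
          ((S : ℚ) + 2 + T * (((P : ℚ) + 1) * (S + 2) + 1)) =
          -((((S : ℚ) + 2) + (T + 1) * (((P : ℚ) + 1) * (S + 2) + 1)) /
            ((S : ℚ) + 2 + T * (((P : ℚ) + 1) * (S + 2) + 1))) := by
        field_simp; ring
      rw [h3]
      field_simp
      ring
    have a5 := ncf_rep_aux P _ _ _ (by positivity) (by positivity) a4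
    rw [a5]
    congr 2 <;> ring
  · simp only [List.append_assoc, List.cons_append, List.nil_append]
    rw [Nval_rep_aux _ _ (by simp), Nval, Nval_rep_aux _ _ (by simp), Nval,
      List.replicate_succ', Nval_rep_aux _ _ (by simp), Nval]
    · have : |(-((P : ℤ) + 1 + 2) + 1)| = P + 2 := by
        rw [abs_of_nonpos] <;> omega
      rw [this]
      norm_num
      ring
    · simp
    · simp
end

section
/- For all integers p ≥ 1, t_0 ≤ −1 and t_1 ≥ 1, the list L = [−2, t_0−1, −(p+1)] followed by t_1−1 copies of −2 has negative continued fraction L⁻ = −2 − (1 + p·t_1)/(−1 + t_0 + t_1 − p·t_1 + p·t_0·t_1); moreover N(L) = −t_0·(p+1) if t_1 = 1 and N(L) = −2·t_0·p if t_1 ≥ 2. (This is the computation for case (e) in the classification.) -/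
theorem ncf_rep (n : ℕ) : ncf (List.replicate (n + 1) (-2 : ℚ)) = -((n : ℚ) + 2) / (n + 1) := by
  induction n with
  | zero => norm_num [ncf]
  | succ k ih =>
    have e : ncf (List.replicate (k + 1 + 1) (-2 : ℚ)) =
        -2 - 1 / ncf (List.replicate (k + 1) (-2 : ℚ)) := by
      simp [List.replicate_succ, ncf]
    rw [e, ih]
    have h1 : (k : ℚ) + 1 ≠ 0 := by positivity
    have h2 : (k : ℚ) + 2 ≠ 0 := by positivity
    have h3 : (k : ℚ) + 1 + 1 ≠ 0 := by positivity
    push_cast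
    field_simp
    ring

theorem Nval_rep (n : ℕ) : Nval (List.replicate (n + 1) (-2 : ℤ)) = 2 := by
  induction n with
  | zero => norm_num [Nval]
  | succ k ih =>
    have e : Nval (List.replicate (k + 1 + 1) (-2 : ℤ)) =
        |(-2 : ℤ) + 1| * Nval (List.replicate (k + 1) (-2 : ℤ)) := by
      simp [List.replicate_succ, Nval]
    rw [e, ih]
    norm_num

theorem ncf_tail (p : ℚ) (n : ℕ) :
    ncf (-(p + 1) :: List.replicate n (-2 : ℚ)) = -(p * (n + 1) + 1) / (n + 1) := by
  cases n with
  | zero => simp [ncf]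
  | succ k =>
    have e : ncf (-(p + 1) :: List.replicate (k + 1) (-2 : ℚ)) =
        -(p + 1) - 1 / ncf (List.replicate (k + 1) (-2 : ℚ)) := by
      simp [List.replicate_succ, ncf]
    rw [e, ncf_rep]
    have h1 : (k : ℚ) + 1 ≠ 0 := by positivity
    have h2 : (k : ℚ) + 2 ≠ 0 := by positivity
    have h3 : (k : ℚ) + 1 + 1 ≠ 0 := by positivity
    push_cast
    field_simp
    ring

theorem stmt7 (p t0 t1 : ℤ) (hp : 1 ≤ p) (h0 : t0 ≤ -1) (h1 : 1 ≤ t1) :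
    ncf (([-2, t0 - 1, -(p + 1)] ++
            List.replicate (t1 - 1).toNat (-2 : ℤ)).map (fun r : ℤ => (r : ℚ))) =
        -2 - (1 + (p : ℚ) * t1) /
          (-1 + (t0 : ℚ) + (t1 : ℚ) - (p : ℚ) * t1 + (p : ℚ) * t0 * t1) ∧
      (t1 = 1 → Nval ([-2, t0 - 1, -(p + 1)] ++
          List.replicate (t1 - 1).toNat (-2 : ℤ)) = -t0 * (p + 1)) ∧
      (2 ≤ t1 → Nval ([-2, t0 - 1, -(p + 1)] ++
          List.replicate (t1 - 1).toNat (-2 : ℤ)) = -2 * t0 * p) := by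
  obtain ⟨n, rfl⟩ : ∃ n : ℕ, t1 = n + 1 := ⟨(t1 - 1).toNat, by omega⟩
  have hn : ((n : ℤ) + 1 - 1).toNat = n := by omega
  rw [hn]
  refine ⟨?_, ?_, ?_⟩
  · have e : ncf (([-2, t0 - 1, -(p + 1)] ++
            List.replicate n (-2 : ℤ)).map (fun r : ℤ => (r : ℚ))) =
        -2 - 1 / (((t0 : ℚ) - 1) - 1 / ncf (-((p : ℚ) + 1) :: List.replicate n (-2 : ℚ))) := by
      simp only [List.cons_append, List.nil_append, List.map_cons, List.map_replicate, ncf]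
      push_cast
      rfl
    rw [e, ncf_tail]
    have hp' : (1 : ℚ) ≤ p := by exact_mod_cast hp
    have h1 : (n : ℚ) + 1 ≠ 0 := by positivity
    have h2 : (p : ℚ) * (n + 1) + 1 ≠ 0 := by positivity
    have e2 : ((t0 : ℚ) - 1) - 1 / (-((p : ℚ) * (n + 1) + 1) / (n + 1)) =
        (-1 + (t0 : ℚ) + ((n : ℚ) + 1) - (p : ℚ) * (n + 1) + (p : ℚ) * t0 * (n + 1)) /
          (1 + p * (n + 1)) := by
      have h3 : 1 + (p : ℚ) * (n + 1) ≠ 0 := by rwa [add_comm]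
      rw [neg_div, div_neg, one_div_div, eq_div_iff h3]
      field_simp
      ring
    rw [e2, one_div_div]
    push_cast
    rfl
  · intro h
    obtain rfl : n = 0 := by omega
    simp only [List.cons_append, List.nil_append, List.replicate_zero, Nval]
    rw [sub_add_cancel, abs_of_neg (by omega : t0 < 0), abs_neg, abs_of_pos (by omega : 0 < p + 1)]
    norm_num
  · intro h
    obtain ⟨k, rfl⟩ : ∃ k : ℕ, n = k + 1 := ⟨n - 1, by omega⟩
    have e : Nval ([-2, t0 - 1, -(p + 1)] ++ List.replicate (k + 1) (-2 : ℤ)) =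
        |(-2 : ℤ) + 1| * (|t0 - 1 + 1| * (|-(p + 1) + 1| *
          Nval (List.replicate (k + 1) (-2 : ℤ)))) := by
      simp only [List.cons_append, List.nil_append, List.replicate_succ, Nval]
    rw [e, Nval_rep, sub_add_cancel, abs_of_neg (by omega : t0 < 0),
      abs_of_neg (by omega : -(p + 1) + 1 < 0)]
    norm_num
    ring
end
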